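/- Let s ∈ ℝ. There is a constant C = C(s, χ, ψ) > 0 such that for every u₀ ∈ 𝒮(ℝ²), ‖ψ(t) W(t) u₀‖_{X^{s,1/2,1}} ≤ C ‖u₀‖_{H^s(ℝ²)}, where W(t)u₀ is the function of (t,x,y) with spatial Fourier transform F_{xy}[W(t)u₀](ξ,η) = e^{−|t|(ξ+η)²} e^{it(ξ³+η³)} û₀(ξ,η), and ‖u₀‖_{H^s} = ‖ ⟨|(ξ,η)|⟩^s û₀(ξ,η) ‖_{L²_{ξ,η}}. -/

import Mathlib

/-!
On the Fourier side the estimate decouples. Since `û₀ e^{-|t|(ξ+η)²} e^{it(ξ³+η³)}` is Schwartz for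
every `t`, Fourier inversion gives (`ftt_eq`) that the space-time transform of `ψ(t) W(t) u₀` is
`(2π)² û₀(ξ,η) F(K, σ)` with `K = (ξ+η)²`, `σ = τ - ξ³ - η³` and
`F(K, σ) = ∫ ψ(t) e^{-K|t|} e^{-iσt} dt` (`prof`).

Integrating by parts on the two half lines shows `|F| ≲ 1/(1+K)` and `|F| ≲ (1+K)/σ²`
(`prof_bounds`). With `A = 1 + M²`, the weighted squared `L²_τ` norm of `F` over `|σ| ~ L`, namely
`(A + L) ∫_{|σ| ~ L} |F|² dσ`, is therefore `O(min(L/A, A/L))` (`dyadic_decay`), so its square root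
is summable over dyadic `L` uniformly in `M`. This bounds the `(N, M)` block of the norm by the
`H^s` mass of `u₀` on that block (`piece_le`), and these masses add up to at most `4 ‖u₀‖²_{H^s}`
because at each point at most two dyadic cutoffs of each family are nonzero (`tsum_locDens_le`).
-/

noncomputable section

open MeasureTheory
open scoped ENNReal

/-- Space-time Fourier transform `ũ(τ,ξ,η)` of a function `u(t,x,y)`. -/
def ftt (w : ℝ → ℝ → ℝ → ℂ) (τ ξ η : ℝ) : ℂ :=
  ∫ t : ℝ, ∫ x : ℝ, ∫ y : ℝ,
    Complex.exp (-Complex.I * ((t * τ + x * ξ + y * η : ℝ) : ℂ)) * w t x y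

/-- Spatial Fourier transform of a function of `(x, y)`. -/
def fxy2 (f : ℝ → ℝ → ℂ) (ξ η : ℝ) : ℂ :=
  ∫ x : ℝ, ∫ y : ℝ, Complex.exp (-Complex.I * ((x * ξ + y * η : ℝ) : ℂ)) * f x y

/-- `φ(t) = χ(t) - χ(2t)`. -/
def phiCut (χ : ℝ → ℝ) (t : ℝ) : ℝ := χ t - χ (2 * t)

/-- `φ_N(t) = φ(t/N)`. -/
def phiCutD (χ : ℝ → ℝ) (N t : ℝ) : ℝ := phiCut χ (t / N)

/-- Japanese bracket `⟨x⟩ = (1+x²)^{1/2}` raised to the power `s`. -/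
def jbr (x s : ℝ) : ℝ := (1 + x ^ 2) ^ (s / 2)

/-- The `L²_{t,x,y}` norm of the dyadic piece `P_{N,M} Q_L u`, computed on the
Fourier side via Plancherel's theorem. -/
def PQLnorm (χ : ℝ → ℝ) (N M L : ℝ) (w : ℝ → ℝ → ℝ → ℂ) : ℝ≥0∞ :=
  (∫⁻ v : ℝ × ℝ × ℝ,
      ENNReal.ofReal
        ((phiCutD χ N (Real.sqrt (v.2.1 ^ 2 + v.2.2 ^ 2)) *
            phiCutD χ M (v.2.1 + v.2.2) *
            phiCutD χ L (v.1 - v.2.1 ^ 3 - v.2.2 ^ 3)) ^ 2 *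
          ‖ftt w v.1 v.2.1 v.2.2‖ ^ 2)) ^ ((1 : ℝ) / 2)

/-- The Besov-type Bourgain norm `‖u‖_{X^{s,b,1}}`. -/
def Xnorm (χ : ℝ → ℝ) (s b : ℝ) (w : ℝ → ℝ → ℝ → ℂ) : ℝ≥0∞ :=
  (∑' n : ℤ, ∑' m : ℤ,
      (∑' l : ℤ,
          ENNReal.ofReal (jbr ((2 : ℝ) ^ n) s * jbr (((2 : ℝ) ^ m) ^ 2 + (2 : ℝ) ^ l) b) *
            PQLnorm χ ((2 : ℝ) ^ n) ((2 : ℝ) ^ m) ((2 : ℝ) ^ l) w) ^ 2) ^ ((1 : ℝ) / 2)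

/-- The dissipative-dispersive semigroup `W(t)`, given by the spatial Fourier
multiplier `e^{-|t|(ξ+η)²} e^{it(ξ³+η³)}`, written via the Fourier inversion
formula (up to a harmless normalization constant absorbed in `C`). -/
def Wfun (f : ℝ → ℝ → ℂ) (t x y : ℝ) : ℂ :=
  ∫ ξ : ℝ, ∫ η : ℝ,
    Complex.exp (((-|t| * (ξ + η) ^ 2 : ℝ) : ℂ) +
        Complex.I * ((t * (ξ ^ 3 + η ^ 3) + x * ξ + y * η : ℝ) : ℂ)) * fxy2 f ξ η

/-- The Sobolev norm `‖u₀‖_{H^s} = ‖⟨|(ξ,η)|⟩^s û₀(ξ,η)‖_{L²_{ξ,η}}`. -/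
def Hsnorm (s : ℝ) (f : ℝ → ℝ → ℂ) : ℝ≥0∞ :=
  (∫⁻ z : ℝ × ℝ,
      ENNReal.ofReal ((1 + (z.1 ^ 2 + z.2 ^ 2)) ^ s * ‖fxy2 f z.1 z.2‖ ^ 2)) ^ ((1 : ℝ) / 2)

open scoped FourierTransform SchwartzMap

/-! ### Fourier inversion on `ℝ × ℝ` with the kernel `e^{i⟨x,ξ⟩}` -/

/-- `ℝ²` with its Euclidean structure, where Mathlib's Fourier transform lives. -/
abbrev Plane : Type := WithLp 2 (ℝ × ℝ)

/-- The dilation `z ↦ z / (2π)` from `ℝ × ℝ` to `Plane`, converting between the kernels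
`e^{i⟨x,ξ⟩}` and `e^{2πi⟨x,ξ⟩}`. -/
def dilEquiv : (ℝ × ℝ) ≃L[ℝ] Plane :=
  (ContinuousLinearEquiv.smulLeft (Units.mk0 ((2 * Real.pi)⁻¹ : ℝ) (by positivity))).trans
    (WithLp.prodContinuousLinearEquiv 2 ℝ ℝ ℝ).symm

lemma dilEquiv_apply (z : ℝ × ℝ) : dilEquiv z = WithLp.toLp 2 ((2 * Real.pi)⁻¹ • z) := rfl

/-- A Schwartz function on `ℝ × ℝ` seen on `Plane`. -/
def toPlane (f : 𝓢(ℝ × ℝ, ℂ)) : 𝓢(Plane, ℂ) :=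
  SchwartzMap.compCLMOfContinuousLinearEquiv ℂ (WithLp.prodContinuousLinearEquiv 2 ℝ ℝ ℝ) f

lemma toPlane_apply (f : 𝓢(ℝ × ℝ, ℂ)) (v : Plane) : toPlane f v = f v.ofLp := rfl

lemma integrable_exp_mul (h : 𝓢(ℝ × ℝ, ℂ)) (p : ℝ × ℝ → ℝ) (hp : Continuous p) :
    Integrable (fun z : ℝ × ℝ => Complex.exp (Complex.I * (p z : ℂ)) * h z) := by
  refine h.integrable.bdd_mul (c := 1) (by fun_prop) (Filter.Eventually.of_forall fun z => ?_)
  rw [mul_comm, Complex.norm_exp_ofReal_mul_I]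

lemma iterated_eq_plane (h : 𝓢(ℝ × ℝ, ℂ)) (a b : ℝ) :
    ∫ x : ℝ, ∫ y : ℝ, Complex.exp (Complex.I * ((x * a + y * b : ℝ) : ℂ)) * h (x, y) =
      ∫ v : Plane, Complex.exp (Complex.I * ((v.ofLp.1 * a + v.ofLp.2 * b : ℝ) : ℂ)) *
        h v.ofLp := by
  have h1 := integrable_exp_mul h (fun z => z.1 * a + z.2 * b) (by fun_prop)
  have h2 := integral_prod _ h1
  rw [← h2]
  exact ((WithLp.volume_preserving_ofLp ℝ ℝ).integral_comp
    (MeasurableEquiv.toLp 2 (ℝ × ℝ)).symm.measurableEmbedding _).symm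

/-- The Fourier transform with kernel `e^{-i⟨x,ξ⟩}` as a Schwartz function. -/
def hat (f : 𝓢(ℝ × ℝ, ℂ)) : 𝓢(ℝ × ℝ, ℂ) :=
  SchwartzMap.compCLMOfContinuousLinearEquiv ℂ dilEquiv (𝓕 (toPlane f))

/-- The (unnormalized) inverse Fourier transform with kernel `e^{i⟨x,ξ⟩}`. -/
def unhat (f : 𝓢(ℝ × ℝ, ℂ)) : 𝓢(ℝ × ℝ, ℂ) :=
  SchwartzMap.compCLMOfContinuousLinearEquiv ℂ dilEquiv (𝓕⁻ (toPlane f))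

lemma inner_dil (v : Plane) (z : ℝ × ℝ) :
    2 * Real.pi * inner ℝ v (dilEquiv z) = v.ofLp.1 * z.1 + v.ofLp.2 * z.2 := by
  rw [dilEquiv_apply, WithLp.prod_inner_apply]
  simp only [Prod.smul_fst, Prod.smul_snd, smul_eq_mul, RCLike.inner_apply, conj_trivial]
  field_simp

lemma fxy2_eq_hat (f : 𝓢(ℝ × ℝ, ℂ)) (ξ η : ℝ) :
    fxy2 (fun x y => f (x, y)) ξ η = hat f (ξ, η) := by
  have h := iterated_eq_plane f (-ξ) (-η)
  have h2 : hat f (ξ, η) = 𝓕 (toPlane f : Plane → ℂ) (dilEquiv (ξ, η)) := rfl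
  rw [h2, Real.fourier_eq', fxy2]
  convert h using 1
  · congr! 6
    push_cast; ring
  · refine integral_congr_ae (Filter.Eventually.of_forall fun v => ?_)
    have := inner_dil v (ξ, η)
    simp only [smul_eq_mul, toPlane_apply]
    congr 2
    rw [neg_mul, neg_mul, this]
    push_cast; ring

lemma unhat_eq (f : 𝓢(ℝ × ℝ, ℂ)) (x y : ℝ) :
    ∫ ξ : ℝ, ∫ η : ℝ, Complex.exp (Complex.I * ((ξ * x + η * y : ℝ) : ℂ)) * f (ξ, η) =
      unhat f (x, y) := by
  have h2 : unhat f (x, y) = 𝓕⁻ (toPlane f : Plane → ℂ) (dilEquiv (x, y)) := by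
    rw [← SchwartzMap.fourierInv_coe]; rfl
  rw [h2, Real.fourierInv_eq', iterated_eq_plane]
  refine integral_congr_ae (Filter.Eventually.of_forall fun v => ?_)
  simp only [smul_eq_mul, toPlane_apply, inner_dil]
  congr 2
  ring

lemma hat_unhat (f : 𝓢(ℝ × ℝ, ℂ)) (z : ℝ × ℝ) :
    hat (unhat f) z = (2 * Real.pi) ^ 2 * f z := by
  have h0 : 𝓕 (𝓕⁻ (toPlane f)) = toPlane f := FourierTransform.fourier_fourierInv_eq _
  have h1 : hat (unhat f) z = 𝓕 (toPlane (unhat f) : Plane → ℂ) (dilEquiv z) := rfl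
  have h2 : f z = 𝓕 (𝓕⁻ (toPlane f : Plane → ℂ)) ((2 * Real.pi) • dilEquiv z) := by
    have : 𝓕 (((𝓕⁻ (toPlane f)) : 𝓢(Plane, ℂ)) : Plane → ℂ) ((2 * Real.pi) • dilEquiv z)
      = (𝓕 (𝓕⁻ (toPlane f)) : 𝓢(Plane, ℂ)) ((2 * Real.pi) • dilEquiv z) := rfl
    rw [← SchwartzMap.fourierInv_coe, this, h0, toPlane_apply, dilEquiv_apply]
    congr 1
    ext <;> simp <;> field_simp
  rw [h1, h2, Real.fourier_eq', Real.fourier_eq']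
  have h3 := Measure.integral_comp_smul (volume : Measure Plane) (fun v : Plane =>
    Complex.exp (((-2 * Real.pi * inner ℝ v ((2 * Real.pi) • dilEquiv z) : ℝ) : ℂ) * Complex.I) •
      (𝓕⁻ (toPlane f : Plane → ℂ)) v) (2 * Real.pi)⁻¹
  have hfr : Module.finrank ℝ Plane = 2 := by
    rw [(WithLp.linearEquiv 2 ℝ (ℝ × ℝ)).finrank_eq]; simp
  rw [hfr] at h3
  have h4 : ((2 * Real.pi : ℝ) : ℂ) ^ 2 = ((|(((2 * Real.pi)⁻¹ : ℝ) ^ 2)⁻¹| : ℝ) : ℂ) := by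
    rw [abs_of_pos (by positivity)]; push_cast; field_simp
  push_cast at h4 
  rw [h4, ← Complex.real_smul, ← h3]
  refine integral_congr_ae (Filter.Eventually.of_forall fun v => ?_)
  simp only
  congr 1
  · rw [real_inner_smul_left, real_inner_smul_right]
    congr 3
    field_simp
  · rw [← SchwartzMap.fourierInv_coe]; rfl

/-! ### The multiplier of the semigroup and the space-time Fourier transform -/

/-- `t ↦ e^{it}` has temperate growth: all its derivatives are bounded by `1`. -/
lemma temperate_exp_I : Function.HasTemperateGrowth (fun x : ℝ => Complex.exp (Complex.I * x)) := by
  refine ⟨(contDiff_const.mul Complex.ofRealCLM.contDiff).cexp, fun n => ⟨0, 1, fun x => ?_⟩⟩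
  have key : ∀ n : ℕ, iteratedDeriv n (fun x : ℝ => Complex.exp (Complex.I * x)) =
      fun x : ℝ => Complex.I ^ n * Complex.exp (Complex.I * x) := by
    intro n
    induction n with
    | zero => simp
    | succ n ih =>
      rw [iteratedDeriv_succ, ih]
      funext x
      have : HasDerivAt (fun x : ℝ => Complex.exp (Complex.I * x))
          (Complex.exp (Complex.I * x) * (Complex.I * 1)) x :=
        ((Complex.ofRealCLM.hasDerivAt (x := x)).const_mul Complex.I).cexp
      rw [(this.const_mul (Complex.I ^ n)).deriv]
      ring
  rw [norm_iteratedFDeriv_eq_norm_iteratedDeriv, key]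
  simp [mul_comm Complex.I, Complex.norm_exp_ofReal_mul_I]

/-- `e^{p}` has temperate growth when `p ≤ 0` does, since `exp` and its derivatives are bounded on
the negative half line. -/
lemma temperate_exp_nonpos {D : Type*} [NormedAddCommGroup D] [NormedSpace ℝ D] {p : D → ℝ}
    (hp : p.HasTemperateGrowth) (hp0 : ∀ z, p z ≤ 0) :
    Function.HasTemperateGrowth (fun z => Real.exp (p z)) := by
  refine Function.HasTemperateGrowth.comp' (g := Real.exp) (f := p) (t := Set.Iic 0) ?_
    (uniqueDiffOn_Iic 0) Real.contDiff_exp.contDiffOn ?_ hp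
  · rintro _ ⟨z, rfl⟩; exact hp0 z
  · refine fun N => ⟨0, 1, zero_le_one, fun n _ x hx => ?_⟩
    rw [norm_iteratedFDerivWithin_eq_norm_iteratedDerivWithin,
      iteratedDerivWithin_eq_iteratedDeriv (uniqueDiffOn_Iic 0) Real.contDiff_exp.contDiffAt hx,
      iteratedDeriv_eq_iterate, Real.iter_deriv_exp]
    simpa using hx

/-- The Fourier multiplier of `W(t)`. -/
def Wmult (t : ℝ) (z : ℝ × ℝ) : ℂ :=
  ((Real.exp (-|t| * (z.1 + z.2) ^ 2) : ℝ) : ℂ) *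
    Complex.exp (Complex.I * ((t * (z.1 ^ 3 + z.2 ^ 3) : ℝ) : ℂ))

lemma temperate_Wmult (t : ℝ) : (Wmult t).HasTemperateGrowth := by
  have h1 : Function.HasTemperateGrowth (fun z : ℝ × ℝ => z.1) :=
    (ContinuousLinearMap.fst ℝ ℝ ℝ).hasTemperateGrowth
  have h2 : Function.HasTemperateGrowth (fun z : ℝ × ℝ => z.2) :=
    (ContinuousLinearMap.snd ℝ ℝ ℝ).hasTemperateGrowth
  have h3 : Function.HasTemperateGrowth (fun z : ℝ × ℝ => -|t| * (z.1 + z.2) ^ 2) :=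
    (Function.HasTemperateGrowth.const _).mul ((h1.add h2).pow 2)
  have h4 : Function.HasTemperateGrowth (fun z : ℝ × ℝ => t * (z.1 ^ 3 + z.2 ^ 3)) :=
    (Function.HasTemperateGrowth.const _).mul ((h1.pow 3).add (h2.pow 3))
  have h5 := temperate_exp_nonpos h3 (fun z => by
    have := mul_nonneg (abs_nonneg t) (sq_nonneg (z.1 + z.2)); linarith)
  exact (Complex.ofRealCLM.hasTemperateGrowth.comp h5).mul (temperate_exp_I.comp h4)

/-- `û₀` times the multiplier of `W(t)`, as a Schwartz function. -/
def Ghat (u : 𝓢(ℝ × ℝ, ℂ)) (t : ℝ) : 𝓢(ℝ × ℝ, ℂ) :=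
  SchwartzMap.smulLeftCLM ℂ (Wmult t) (hat u)

lemma Ghat_apply (u : 𝓢(ℝ × ℝ, ℂ)) (t : ℝ) (z : ℝ × ℝ) : Ghat u t z = Wmult t z * hat u z :=
  SchwartzMap.smulLeftCLM_apply_apply (temperate_Wmult t) _ _

lemma Wfun_eq (u : 𝓢(ℝ × ℝ, ℂ)) (t x y : ℝ) :
    Wfun (fun x' y' => u (x', y')) t x y = unhat (Ghat u t) (x, y) := by
  rw [← unhat_eq, Wfun]
  congr! 4 with ξ η
  rw [fxy2_eq_hat, Ghat_apply, Wmult, ← mul_assoc]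
  congr 1
  rw [Complex.ofReal_exp, ← Complex.exp_add, ← Complex.exp_add]
  congr 1
  push_cast; ring

/-- The temporal profile `∫ ψ(t) e^{-K|t|} e^{-iσt} dt` of the space-time Fourier transform, where
`K` stands for `(ξ+η)²` and `σ` for the modulation `τ - ξ³ - η³`. -/
def prof (ψ : ℝ → ℝ) (K σ : ℝ) : ℂ :=
  ∫ t : ℝ, (ψ t : ℂ) * Complex.exp (((-(K * |t|) : ℝ) : ℂ) - Complex.I * ((σ * t : ℝ) : ℂ))

lemma ftt_eq (ψ : ℝ → ℝ) (u : 𝓢(ℝ × ℝ, ℂ)) (τ ξ η : ℝ) :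
    ftt (fun t x y => (ψ t : ℂ) * Wfun (fun x' y' => u (x', y')) t x y) τ ξ η =
      (2 * Real.pi) ^ 2 * hat u (ξ, η) * prof ψ ((ξ + η) ^ 2) (τ - ξ ^ 3 - η ^ 3) := by
  rw [ftt, prof, ← integral_const_mul]
  refine integral_congr_ae (Filter.Eventually.of_forall fun t => ?_)
  simp only
  have h1 : ∀ x y : ℝ, Complex.exp (-Complex.I * ((t * τ + x * ξ + y * η : ℝ) : ℂ)) *
      ((ψ t : ℂ) * Wfun (fun x' y' => u (x', y')) t x y) =
      (Complex.exp (-Complex.I * ((t * τ : ℝ) : ℂ)) * ψ t) *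
        (Complex.exp (-Complex.I * ((x * ξ + y * η : ℝ) : ℂ)) * unhat (Ghat u t) (x, y)) := by
    intro x y
    rw [Wfun_eq]
    have : Complex.exp (-Complex.I * ((t * τ + x * ξ + y * η : ℝ) : ℂ)) =
        Complex.exp (-Complex.I * ((t * τ : ℝ) : ℂ)) *
          Complex.exp (-Complex.I * ((x * ξ + y * η : ℝ) : ℂ)) := by
      rw [← Complex.exp_add]; congr 1; push_cast; ring
    rw [this]; ring
  simp_rw [h1, integral_const_mul]
  have h2 := fxy2_eq_hat (unhat (Ghat u t)) ξ η
  rw [fxy2] at h2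
  rw [h2, hat_unhat, Ghat_apply, Wmult]
  have h3 : Complex.exp (((-((ξ + η) ^ 2 * |t|) : ℝ) : ℂ) -
      Complex.I * (((τ - ξ ^ 3 - η ^ 3) * t : ℝ) : ℂ)) =
      Complex.exp (-Complex.I * ((t * τ : ℝ) : ℂ)) *
      (((Real.exp (-|t| * (ξ + η) ^ 2) : ℝ) : ℂ) *
        Complex.exp (Complex.I * ((t * (ξ ^ 3 + η ^ 3) : ℝ) : ℂ))) := by
    rw [Complex.ofReal_exp, ← Complex.exp_add, ← Complex.exp_add]
    congr 1; push_cast; ring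
  rw [h3]; ring

/-! ### The temporal profile -/

/-- The truncated Laplace transform `∫₀³ ρ(t) e^{-zt} dt`. -/
def lap (ρ : ℝ → ℝ) (z : ℂ) : ℂ := ∫ t in (0 : ℝ)..3, (ρ t : ℂ) * Complex.exp (-z * t)

lemma lap_bound {ρ : ℝ → ℝ} (hρ : Continuous ρ) :
    ∃ C : ℝ, 0 ≤ C ∧ ∀ z : ℂ, 0 ≤ z.re → ‖lap ρ z‖ ≤ C := by
  obtain ⟨B, hB⟩ := (isCompact_Icc (a := (0 : ℝ)) (b := 3)).exists_bound_of_continuousOn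
    hρ.continuousOn
  have hB0 : 0 ≤ B := (norm_nonneg _).trans (hB 0 (by simp))
  refine ⟨B * |3 - 0|, by positivity, fun z hz => ?_⟩
  refine intervalIntegral.norm_integral_le_of_norm_le_const fun t ht => ?_
  rw [Set.uIoc_of_le (by norm_num)] at ht
  rw [norm_mul, Complex.norm_real, Complex.norm_exp]
  have h1 : Real.exp ((-z * t).re) ≤ 1 := by
    rw [Real.exp_le_one_iff]
    simp
    exact mul_nonneg hz ht.1.le
  calc ‖ρ t‖ * Real.exp ((-z * t).re) ≤ B * 1 :=
        mul_le_mul (hB t ⟨ht.1.le, ht.2⟩) h1 (Real.exp_pos _).le hB0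
    _ = B := mul_one B

/-- Integration by parts. -/
lemma lap_parts {ρ : ℝ → ℝ} (hρ : ContDiff ℝ 1 ρ) (h3 : ρ 3 = 0) (z : ℂ) :
    z * lap ρ z = ρ 0 + lap (deriv ρ) z := by
  have hd : ∀ t ∈ Set.uIcc (0 : ℝ) 3, HasDerivAt
      (fun t : ℝ => (ρ t : ℂ) * Complex.exp (-z * t))
      (((deriv ρ t : ℝ) : ℂ) * Complex.exp (-z * t) +
        -(z * ((ρ t : ℂ) * Complex.exp (-z * t)))) t := by
    intro t _
    have h1 : HasDerivAt (fun t : ℝ => (ρ t : ℂ)) ((deriv ρ t : ℝ) : ℂ) t :=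
      ((hρ.differentiable (by norm_num)) t).hasDerivAt.ofReal_comp
    have h2 : HasDerivAt (fun t : ℝ => Complex.exp (-z * t))
        (Complex.exp (-z * t) * (-z * 1)) t :=
      ((Complex.ofRealCLM.hasDerivAt (x := t)).const_mul (-z)).cexp
    refine (h1.mul h2).congr_deriv ?_
    ring
  have c0 : Continuous ρ := hρ.continuous
  have c1 : Continuous (deriv ρ) := hρ.continuous_deriv (by norm_num)
  have i1 : IntervalIntegrable (fun t : ℝ => ((deriv ρ t : ℝ) : ℂ) * Complex.exp (-z * t))
      volume 0 3 := (by fun_prop : Continuous _).intervalIntegrable _ _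
  have i2 : IntervalIntegrable (fun t : ℝ => -(z * ((ρ t : ℂ) * Complex.exp (-z * t))))
      volume 0 3 := (by fun_prop : Continuous _).intervalIntegrable _ _
  have h := intervalIntegral.integral_eq_sub_of_hasDerivAt hd (i1.add i2)
  rw [intervalIntegral.integral_add i1 i2, intervalIntegral.integral_neg,
    intervalIntegral.integral_const_mul] at h
  simp only [h3, Complex.ofReal_zero, zero_mul, mul_zero, Complex.exp_zero, mul_one,
    zero_sub] at h
  rw [lap, lap]
  linear_combination -h

lemma lap_estimates {ρ : ℝ → ℝ} (hρ : ContDiff ℝ 2 ρ) (h0 : ρ 0 = 1) (h0' : deriv ρ 0 = 0)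
    (h3 : ρ 3 = 0) (h3' : deriv ρ 3 = 0) :
    ∃ C : ℝ, 0 ≤ C ∧ ∀ z : ℂ, 0 ≤ z.re →
      ‖lap ρ z‖ ≤ C ∧ ‖z * lap ρ z‖ ≤ C ∧ ‖z ^ 2 * lap ρ z - z‖ ≤ C := by
  have hρ' : ContDiff ℝ 1 (deriv ρ) := by
    have : ContDiff ℝ (1 + 1) ρ := by simpa [one_add_one_eq_two] using hρ
    exact (contDiff_succ_iff_deriv.1 this).2.2
  obtain ⟨C0, hC0, H0⟩ := lap_bound hρ.continuous
  obtain ⟨C1, hC1, H1⟩ := lap_bound hρ'.continuous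
  obtain ⟨C2, hC2, H2⟩ := lap_bound (hρ'.continuous_deriv le_rfl)
  have e1 := lap_parts (hρ.of_le (by norm_num)) h3
  have e2 := lap_parts hρ' h3'
  rw [h0] at e1
  rw [h0'] at e2
  refine ⟨1 + C0 + C1 + C2, by positivity, fun z hz => ⟨?_, ?_, ?_⟩⟩
  · linarith [H0 z hz]
  · rw [e1]
    refine (norm_add_le _ _).trans ?_
    have := H1 z hz
    simp
    linarith
  · have : z ^ 2 * lap ρ z - z = lap (deriv (deriv ρ)) z := by
      have a := e1 z
      have b := e2 z
      push_cast at a b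
      linear_combination z * a + b
    rw [this]
    linarith [H2 z hz]

lemma prof_eq {ψ : ℝ → ℝ} (hψ : Continuous ψ) (hs : Function.support ψ ⊆ Set.Icc (-2) 2)
    (K σ : ℝ) :
    prof ψ K σ = lap ψ (K + σ * Complex.I) + lap (fun t => ψ (-t)) (K - σ * Complex.I) := by
  set f : ℝ → ℂ := fun t => (ψ t : ℂ) *
    Complex.exp (((-(K * |t|) : ℝ) : ℂ) - Complex.I * ((σ * t : ℝ) : ℂ)) with hf
  have hfc : Continuous f := by fun_prop
  have hsupp : Function.support f ⊆ Set.Ioc (-3) 3 := by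
    intro t ht
    have : ψ t ≠ 0 := by
      intro h; apply ht; simp [hf, h]
    have := hs this
    exact ⟨by linarith [this.1], by linarith [this.2]⟩
  have h1 : prof ψ K σ = ∫ t in (-3 : ℝ)..3, f t :=
    (intervalIntegral.integral_eq_integral_of_support_subset hsupp).symm
  rw [h1, ← intervalIntegral.integral_add_adjacent_intervals (b := 0)
    (hfc.intervalIntegrable _ _) (hfc.intervalIntegrable _ _), add_comm]
  congr 1
  · refine intervalIntegral.integral_congr fun t ht => ?_
    rw [Set.uIcc_of_le (by norm_num)] at ht
    simp only [hf]
    rw [abs_of_nonneg ht.1]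
    congr 2
    push_cast; ring
  · have h2 := intervalIntegral.integral_comp_neg (a := 0) (b := 3) f
    rw [neg_zero] at h2
    rw [← h2]
    refine intervalIntegral.integral_congr fun t ht => ?_
    rw [Set.uIcc_of_le (by norm_num)] at ht
    simp only [hf]
    rw [abs_neg, abs_of_nonneg ht.1]
    congr 2
    push_cast; ring

/-- The profile is `O(1/(1+K))`, and `O((1+K)/σ²)` for large modulation. In the second bound the
boundary terms `1/z` and `1/z̄` of the two half lines, `z = K + iσ`, add up to `2K/|z|²`. -/
lemma prof_bounds {ψ : ℝ → ℝ} (hψ : ContDiff ℝ (⊤ : ℕ∞) ψ)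
    (hs : Function.support ψ ⊆ Set.Icc (-2) 2) (h1 : ∀ t ∈ Set.Icc (-1 : ℝ) 1, ψ t = 1) :
    ∃ C : ℝ, 0 < C ∧ ∀ K σ : ℝ, 0 ≤ K →
      (1 + K) * ‖prof ψ K σ‖ ≤ C ∧ σ ^ 2 * ‖prof ψ K σ‖ ≤ C * (1 + K) := by
  have z3 : ∀ t : ℝ, 2 < |t| → ψ t = 0 := by
    intro t ht
    by_contra h
    have := hs h
    exact absurd (abs_le.2 this) (not_le.2 ht)
  have d0 : deriv ψ 0 = 0 := by
    have : ψ =ᶠ[nhds 0] fun _ => 1 := by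
      filter_upwards [Icc_mem_nhds (show (-1 : ℝ) < 0 by norm_num) (show (0 : ℝ) < 1 by norm_num)]
        with t ht using h1 t ht
    rw [this.deriv_eq, deriv_const]
  have d3 : ∀ t : ℝ, 2 < |t| → deriv ψ t = 0 := by
    intro t ht
    have : ψ =ᶠ[nhds t] fun _ => 0 := by
      filter_upwards [(continuous_abs.isOpen_preimage _ isOpen_Ioi).mem_nhds
        (show t ∈ (fun x : ℝ => |x|) ⁻¹' Set.Ioi 2 from ht)] with x hx using z3 x hx
    rw [this.deriv_eq, deriv_const]
  have hψ2 : ContDiff ℝ 2 ψ := contDiff_infty.1 hψ 2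
  have hneg : ContDiff ℝ 2 (fun t => ψ (-t)) := hψ2.comp contDiff_neg
  obtain ⟨A, hA, HA⟩ := lap_estimates hψ2 (h1 0 (by simp)) d0 (z3 3 (by norm_num))
    (d3 3 (by norm_num))
  obtain ⟨B, hB, HB⟩ := lap_estimates hneg (by simpa using h1 0 (by simp))
    (by rw [deriv_comp_neg]; simp [d0]) (z3 (-3) (by norm_num))
    (by rw [deriv_comp_neg, d3 (-3) (by norm_num), neg_zero])
  refine ⟨2 * (A + B + 1), by positivity, fun K σ hK => ?_⟩
  rw [prof_eq hψ.continuous hs]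
  set z : ℂ := K + σ * Complex.I with hz
  set z' : ℂ := K - σ * Complex.I with hz'
  have zr : z.re = K := by simp [hz]
  have zr' : z'.re = K := by simp [hz']
  obtain ⟨a0, a1, a2⟩ := HA z (by rw [zr]; exact hK)
  obtain ⟨b0, b1, b2⟩ := HB z' (by rw [zr']; exact hK)
  set P := lap ψ z
  set Q := lap (fun t => ψ (-t)) z'
  have hsum := norm_add_le P Q
  have hz2 : ‖z‖ ^ 2 = K ^ 2 + σ ^ 2 := by
    rw [Complex.sq_norm, Complex.normSq_apply]; simp [hz]; ring
  have hz2' : ‖z'‖ ^ 2 = K ^ 2 + σ ^ 2 := by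
    rw [Complex.sq_norm, Complex.normSq_apply]; simp [hz']; ring
  constructor
  · have k1 : K * ‖P‖ ≤ A := by
      refine le_trans ?_ a1
      rw [norm_mul]
      gcongr
      rw [← zr]; exact Complex.re_le_norm z
    have k2 : K * ‖Q‖ ≤ B := by
      refine le_trans ?_ b1
      rw [norm_mul]
      gcongr
      rw [← zr']; exact Complex.re_le_norm z'
    nlinarith
  · rcases eq_or_ne σ 0 with rfl | hσ
    · simp; positivity
    have hpos : 0 < K ^ 2 + σ ^ 2 := by positivity
    have hn0 : z ≠ 0 := by
      intro h; rw [h] at hz2; simp at hz2; exact hpos.ne hz2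
    have hn0' : z' ≠ 0 := by
      intro h; rw [h] at hz2'; simp at hz2'; exact hpos.ne hz2'
    have hzz : z * z' = ((K ^ 2 + σ ^ 2 : ℝ) : ℂ) := by
      rw [hz, hz']; push_cast
      linear_combination (-(σ : ℂ) ^ 2) * Complex.I_sq
    have hzs : z + z' = ((2 * K : ℝ) : ℂ) := by
      rw [hz, hz']; push_cast; ring
    have key : ((K ^ 2 + σ ^ 2 : ℝ) : ℂ) * (P + Q) =
        ((2 * K : ℝ) : ℂ) + (z' / z) * (z ^ 2 * P - z) + (z / z') * (z' ^ 2 * Q - z') := by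
      rw [← hzz, ← hzs]; field_simp; ring
    have hnn : ‖z‖ = ‖z'‖ := by
      rw [← sq_eq_sq₀ (norm_nonneg _) (norm_nonneg _), hz2, hz2']
    have hn1 : ‖z' / z‖ = 1 := by
      rw [norm_div, hnn, div_self (norm_ne_zero_iff.2 hn0')]
    have hn2 : ‖z / z'‖ = 1 := by
      rw [norm_div, hnn, div_self (norm_ne_zero_iff.2 hn0')]
    have := congrArg norm key
    rw [norm_mul, Complex.norm_real, Real.norm_of_nonneg hpos.le] at this
    have hle : (K ^ 2 + σ ^ 2) * ‖P + Q‖ ≤ 2 * K + A + B := by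
      rw [this]
      refine (norm_add₃_le).trans ?_
      rw [norm_mul, norm_mul, hn1, hn2, one_mul, one_mul, Complex.norm_real,
        Real.norm_of_nonneg (by positivity)]
      gcongr
    have : σ ^ 2 * ‖P + Q‖ ≤ (K ^ 2 + σ ^ 2) * ‖P + Q‖ := by
      gcongr; nlinarith
    nlinarith

/-! ### Dyadic cutoffs -/

lemma phi_sq_le {χ : ℝ → ℝ} (h0 : ∀ t, 0 ≤ χ t) (h1 : ∀ t, χ t ≤ 1) (N t : ℝ) :
    phiCutD χ N t ^ 2 ≤ 1 := by
  rw [sq_le_one_iff_abs_le_one, abs_le, phiCutD, phiCut]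
  constructor <;> linarith [h0 (t / N), h1 (t / N), h0 (2 * (t / N)), h1 (2 * (t / N))]

lemma phi_supp {χ : ℝ → ℝ} (hs : Function.support χ ⊆ Set.Ioo (-2) 2)
    (ho : ∀ t ∈ Set.Icc (-1 : ℝ) 1, χ t = 1) {N t : ℝ} (hN : 0 < N) (h : phiCutD χ N t ≠ 0) :
    N / 2 < |t| ∧ |t| < 2 * N := by
  have hz : ∀ x : ℝ, 2 ≤ |x| → χ x = 0 := by
    intro x hx
    by_contra hne
    have := abs_lt.2 (hs hne)
    linarith
  have habs : |t / N| = |t| / N := by rw [abs_div, abs_of_pos hN]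
  constructor
  · by_contra! hc
    apply h
    have h2 : |t / N| ≤ 1 / 2 := by rw [habs, div_le_iff₀ hN]; linarith
    have h3 := abs_le.1 h2
    rw [phiCutD, phiCut, ho _ ⟨by linarith, by linarith⟩, ho _ ⟨by linarith, by linarith⟩, sub_self]
  · by_contra! hc
    apply h
    have h2 : 2 ≤ |t / N| := by rw [habs, le_div_iff₀ hN]; linarith
    rw [phiCutD, phiCut, hz _ h2, hz _ (by rw [abs_mul, abs_two]; linarith), sub_self]

/-- At each point at most two dyadic cutoffs are nonzero. -/
lemma tsum_phi_le {χ : ℝ → ℝ} (h0 : ∀ t, 0 ≤ χ t) (h1 : ∀ t, χ t ≤ 1)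
    (hs : Function.support χ ⊆ Set.Ioo (-2) 2)
    (ho : ∀ t ∈ Set.Icc (-1 : ℝ) 1, χ t = 1) (t : ℝ) :
    ∑' n : ℤ, ENNReal.ofReal (phiCutD χ ((2 : ℝ) ^ n) t ^ 2) ≤ 2 := by
  set k := Int.log 2 |t| with hk
  have hzero : ∀ n ∉ ({k, k + 1} : Finset ℤ),
      ENNReal.ofReal (phiCutD χ ((2 : ℝ) ^ n) t ^ 2) = 0 := by
    intro n hn
    by_contra hne
    have hφ : phiCutD χ ((2 : ℝ) ^ n) t ≠ 0 := by
      intro h; apply hne; simp [h]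
    obtain ⟨ha, hb⟩ := phi_supp hs ho (by positivity) hφ
    have hpos : 0 < |t| := lt_trans (by positivity) ha
    have e1 := Int.zpow_log_le_self (b := 2) (by norm_num) hpos
    have e2 := Int.lt_zpow_succ_log_self (b := 2) (by norm_num) |t|
    rw [← hk] at e1 e2
    push_cast at e1 e2
    have i1 : (2 : ℝ) ^ k < (2 : ℝ) ^ (n + 1) := by
      rw [zpow_add_one₀ (by norm_num)]; linarith
    have i2 : (2 : ℝ) ^ (n - 1) < (2 : ℝ) ^ (k + 1) := by
      rw [zpow_sub_one₀ (by norm_num)]; linarith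
    rw [zpow_lt_zpow_iff_right₀ (by norm_num)] at i1 i2
    apply hn
    simp only [Finset.mem_insert, Finset.mem_singleton]
    omega
  rw [tsum_eq_sum hzero]
  calc ∑ n ∈ ({k, k + 1} : Finset ℤ), ENNReal.ofReal (phiCutD χ ((2 : ℝ) ^ n) t ^ 2)
      ≤ ∑ n ∈ ({k, k + 1} : Finset ℤ), 1 :=
        Finset.sum_le_sum fun n _ => ENNReal.ofReal_le_one.2 (phi_sq_le h0 h1 _ _)
    _ = 2 := by
        rw [Finset.sum_pair (by omega)]; exact one_add_one_eq_two

/-! ### Weights and dyadic pieces -/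

lemma rpow_compare {x y : ℝ} (hx : 0 < x) (hy : 0 < y) (h1 : x ≤ 4 * y) (h2 : y ≤ 4 * x) (s : ℝ) :
    x ^ s ≤ 4 ^ |s| * y ^ s := by
  rcases le_total 0 s with hs | hs
  · rw [abs_of_nonneg hs, ← Real.mul_rpow (by norm_num) hy.le]
    exact Real.rpow_le_rpow hx.le h1 hs
  · rw [abs_of_nonpos hs]
    have h3 : y / 4 ≤ x := by linarith
    refine (Real.rpow_le_rpow_of_nonpos (by positivity) h3 hs).trans (le_of_eq ?_)
    rw [Real.div_rpow hy.le (by norm_num), Real.rpow_neg (by norm_num)]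
    field_simp

lemma jbr_nonneg (x s : ℝ) : 0 ≤ jbr x s := Real.rpow_nonneg (by positivity) _

lemma jbr_sq (x s : ℝ) : jbr x s ^ 2 = (1 + x ^ 2) ^ s := by
  rw [jbr, ← Real.rpow_mul_natCast (by positivity)]
  congr 1; push_cast; ring

lemma jbr_half_sq_le {x : ℝ} (hx : 0 ≤ x) : jbr x (1 / 2) ^ 2 ≤ 1 + x := by
  rw [jbr_sq, ← Real.sqrt_eq_rpow]
  exact Real.sqrt_le_iff.2 ⟨by positivity, by nlinarith⟩

/-- The two bounds of the profile at modulation `L` and dissipation `A = 1 + M²` combine into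
geometric decay away from the scale `L ~ A`. -/
lemma dyadic_decay {A C p : ℝ} (hA : 0 < A) (hp : 0 ≤ p) (l : ℤ)
    (h1 : A * p ≤ C) (h2 : ((2 : ℝ) ^ l) ^ 2 * p ≤ C * A) :
    (A + (2 : ℝ) ^ l) * (2 : ℝ) ^ l * p ^ 2 ≤
      4 * C ^ 2 * (1 / 2) ^ (l - Int.log 2 A).natAbs := by
  set k := Int.log 2 A with hk
  have e1 := Int.zpow_log_le_self (b := 2) (by norm_num) hA
  have e2 := Int.lt_zpow_succ_log_self (b := 2) (by norm_num) A
  rw [← hk] at e1 e2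
  push_cast at e1 e2
  have hL : (0 : ℝ) < (2 : ℝ) ^ l := by positivity
  set L : ℝ := (2 : ℝ) ^ l with hLdef
  have q1 : p ≤ C / A := by rw [le_div_iff₀ hA]; linarith
  have q2 : p ≤ C * A / L ^ 2 := by rw [le_div_iff₀ (by positivity)]; linarith
  have s1 : p ^ 2 ≤ (C / A) ^ 2 := by gcongr
  have s2 : p ^ 2 ≤ (C * A / L ^ 2) ^ 2 := by gcongr
  have m1 : L ≤ A → (A + L) * L * p ^ 2 ≤ 2 * C ^ 2 * (L / A) := by
    intro hLA
    calc (A + L) * L * p ^ 2 ≤ (A + A) * L * (C / A) ^ 2 := by gcongr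
      _ = 2 * C ^ 2 * (L / A) := by field_simp; ring
  have m2 : A ≤ L → (A + L) * L * p ^ 2 ≤ 2 * C ^ 2 * (A / L) := by
    intro hLA
    calc (A + L) * L * p ^ 2 ≤ (L + L) * L * (C * A / L ^ 2) ^ 2 := by gcongr
      _ = 2 * C ^ 2 * (A / L * (A / L)) := by field_simp; ring
      _ ≤ 2 * C ^ 2 * (A / L * 1) := by
          gcongr
          rw [div_le_one hL]; exact hLA
      _ = _ := by rw [mul_one]
  have hpow : ∀ j : ℤ, 0 ≤ j → ((1 : ℝ) / 2) ^ j.natAbs = (2 : ℝ) ^ (-j) := by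
    intro j hj
    rw [zpow_neg, one_div, inv_pow, ← zpow_natCast, Int.natAbs_of_nonneg hj]
  rcases lt_or_ge l k with hlk | hlk
  · have hle : L ≤ A := by
      refine le_trans ?_ e1
      exact zpow_le_zpow_right₀ (by norm_num) hlk.le
    have hn : (l - k).natAbs = (k - l).natAbs := by omega
    rw [hn, hpow _ (by omega)]
    have : L / A ≤ (2 : ℝ) ^ (-(k - l)) := by
      rw [div_le_iff₀ hA]
      calc L = (2 : ℝ) ^ (-(k - l)) * (2 : ℝ) ^ k := by
            rw [← zpow_add₀ (by norm_num), hLdef]; congr 1; ring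
        _ ≤ _ := by gcongr
    have hx : 0 ≤ (2 : ℝ) ^ (-(k - l)) := by positivity
    calc _ ≤ 2 * C ^ 2 * (L / A) := m1 hle
      _ ≤ 2 * C ^ 2 * (2 : ℝ) ^ (-(k - l)) := by gcongr
      _ ≤ _ := by gcongr; norm_num
  · have hr : A / L ≤ 2 * (2 : ℝ) ^ (-(l - k)) := by
      rw [div_le_iff₀ hL]
      calc A ≤ (2 : ℝ) ^ (k + 1) := e2.le
        _ = 2 * (2 : ℝ) ^ (-(l - k)) * L := by
            rw [mul_assoc, hLdef, ← zpow_add₀ (by norm_num), zpow_add_one₀ (by norm_num), mul_comm]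
            congr 2; ring
    rw [hpow _ (by omega)]
    rcases le_total A L with hAL | hAL
    · calc _ ≤ 2 * C ^ 2 * (A / L) := m2 hAL
        _ ≤ 2 * C ^ 2 * (2 * (2 : ℝ) ^ (-(l - k))) := by gcongr
        _ = _ := by ring
    · have : L / A ≤ A / L := by
        refine ((div_le_one hA).2 hAL).trans ((one_le_div hL).2 hAL)
      calc _ ≤ 2 * C ^ 2 * (L / A) := m1 hAL
        _ ≤ 2 * C ^ 2 * (2 * (2 : ℝ) ^ (-(l - k))) := by gcongr; linarith
        _ = _ := by ring

/-- The squared `H^s` density of `u` localized to spatial frequencies `N = 2ⁿ`, `M = 2ᵐ`. -/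
def locDens (χ : ℝ → ℝ) (s : ℝ) (u : 𝓢(ℝ × ℝ, ℂ)) (n m : ℤ) (z : ℝ × ℝ) : ℝ :=
  phiCutD χ ((2 : ℝ) ^ n) (Real.sqrt (z.1 ^ 2 + z.2 ^ 2)) ^ 2 *
    phiCutD χ ((2 : ℝ) ^ m) (z.1 + z.2) ^ 2 * ((1 + (z.1 ^ 2 + z.2 ^ 2)) ^ s * ‖hat u z‖ ^ 2)

lemma continuous_phi {χ : ℝ → ℝ} (hχ : Continuous χ) (N : ℝ) : Continuous (phiCutD χ N) := by
  unfold phiCutD phiCut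
  fun_prop

lemma measurable_dens (s : ℝ) (u : 𝓢(ℝ × ℝ, ℂ)) :
    Measurable (fun z : ℝ × ℝ => (1 + (z.1 ^ 2 + z.2 ^ 2)) ^ s * ‖hat u z‖ ^ 2) := by
  have : Continuous (hat u) := (hat u).continuous
  fun_prop

lemma measurable_locDens {χ : ℝ → ℝ} (hχ : Continuous χ) (s : ℝ) (u : 𝓢(ℝ × ℝ, ℂ)) (n m : ℤ) :
    Measurable (locDens χ s u n m) := by
  have h1 := (continuous_phi hχ ((2 : ℝ) ^ n)).measurable
  have h2 := (continuous_phi hχ ((2 : ℝ) ^ m)).measurable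
  have h3 := measurable_dens s u
  unfold locDens
  refine Measurable.mul (Measurable.mul ?_ ?_) h3
  · exact (h1.comp (by fun_prop)).pow_const 2
  · exact (h2.comp (by fun_prop)).pow_const 2

/-- Almost orthogonality: the localized densities sum to at most four times the full one. -/
lemma tsum_locDens_le {χ : ℝ → ℝ} (hχ : Continuous χ) (h0 : ∀ t, 0 ≤ χ t) (h1 : ∀ t, χ t ≤ 1)
    (hs : Function.support χ ⊆ Set.Ioo (-2) 2)
    (ho : ∀ t ∈ Set.Icc (-1 : ℝ) 1, χ t = 1) (s : ℝ) (u : 𝓢(ℝ × ℝ, ℂ)) :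
    ∑' n : ℤ, ∑' m : ℤ, ∫⁻ z, ENNReal.ofReal (locDens χ s u n m z) ≤
      4 * ∫⁻ z : ℝ × ℝ, ENNReal.ofReal ((1 + (z.1 ^ 2 + z.2 ^ 2)) ^ s * ‖hat u z‖ ^ 2) := by
  have hm : ∀ n m, Measurable fun z => ENNReal.ofReal (locDens χ s u n m z) :=
    fun n m => (measurable_locDens hχ s u n m).ennreal_ofReal
  have e1 : ∀ n : ℤ, ∑' m : ℤ, ∫⁻ z, ENNReal.ofReal (locDens χ s u n m z) =
      ∫⁻ z, ∑' m : ℤ, ENNReal.ofReal (locDens χ s u n m z) := fun n =>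
    (lintegral_tsum fun m => (hm n m).aemeasurable).symm
  simp_rw [e1]
  rw [← lintegral_tsum fun n => (Measurable.tsum (hm n)).aemeasurable,
    ← lintegral_const_mul _ (measurable_dens s u).ennreal_ofReal]
  refine lintegral_mono fun z => ?_
  have hsplit : ∀ n m : ℤ, ENNReal.ofReal (locDens χ s u n m z) =
      ENNReal.ofReal (phiCutD χ ((2 : ℝ) ^ n) (Real.sqrt (z.1 ^ 2 + z.2 ^ 2)) ^ 2) *
      (ENNReal.ofReal (phiCutD χ ((2 : ℝ) ^ m) (z.1 + z.2) ^ 2) *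
      ENNReal.ofReal ((1 + (z.1 ^ 2 + z.2 ^ 2)) ^ s * ‖hat u z‖ ^ 2)) := by
    intro n m
    rw [locDens, mul_assoc, ENNReal.ofReal_mul (by positivity), ENNReal.ofReal_mul (by positivity)]
  simp_rw [hsplit, ENNReal.tsum_mul_left, ENNReal.tsum_mul_right]
  rw [← mul_assoc]
  gcongr
  calc _ ≤ (2 : ℝ≥0∞) * 2 := by
        gcongr
        · exact tsum_phi_le h0 h1 hs ho _
        · exact tsum_phi_le h0 h1 hs ho _
    _ = 4 := by norm_num

set_option maxHeartbeats 1000000 in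
/-- Pointwise bound of the weighted integrand of `PQLnorm`. -/
lemma integrand_le {χ ψ : ℝ → ℝ} (h0 : ∀ t, 0 ≤ χ t) (h1 : ∀ t, χ t ≤ 1)
    (hs : Function.support χ ⊆ Set.Ioo (-2) 2)
    (ho : ∀ t ∈ Set.Icc (-1 : ℝ) 1, χ t = 1) (s : ℝ) {C : ℝ} (hC : 0 < C)
    (hprof : ∀ K σ : ℝ, 0 ≤ K →
      (1 + K) * ‖prof ψ K σ‖ ≤ C ∧ σ ^ 2 * ‖prof ψ K σ‖ ≤ C * (1 + K))
    (u : 𝓢(ℝ × ℝ, ℂ)) (n m l : ℤ) (τ ξ η : ℝ) :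
    (jbr ((2 : ℝ) ^ n) s * jbr (((2 : ℝ) ^ m) ^ 2 + (2 : ℝ) ^ l) (1 / 2)) ^ 2 *
      ((phiCutD χ ((2 : ℝ) ^ n) (Real.sqrt (ξ ^ 2 + η ^ 2)) *
            phiCutD χ ((2 : ℝ) ^ m) (ξ + η) *
            phiCutD χ ((2 : ℝ) ^ l) (τ - ξ ^ 3 - η ^ 3)) ^ 2 *
          ‖ftt (fun t x y => (ψ t : ℂ) * Wfun (fun x' y' => u (x', y')) t x y) τ ξ η‖ ^ 2) ≤
      (4 ^ |s| * (2 * Real.pi) ^ 4 * (4 * (16 * C) ^ 2) *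
        (1 / 2) ^ (l - Int.log 2 (1 + ((2 : ℝ) ^ m) ^ 2)).natAbs / (2 : ℝ) ^ l) *
      locDens χ s u n m (ξ, η) *
      (Set.Icc (-(2 * (2 : ℝ) ^ l)) (2 * (2 : ℝ) ^ l)).indicator 1 (τ - (ξ ^ 3 + η ^ 3)) := by
  have hN : (0 : ℝ) < (2 : ℝ) ^ n := by positivity
  have hM : (0 : ℝ) < (2 : ℝ) ^ m := by positivity
  have hL : (0 : ℝ) < (2 : ℝ) ^ l := by positivity
  set p := ‖prof ψ ((ξ + η) ^ 2) (τ - ξ ^ 3 - η ^ 3)‖ with hp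
  have hp0 : 0 ≤ p := norm_nonneg _
  have hf : ‖ftt (fun t x y => (ψ t : ℂ) * Wfun (fun x' y' => u (x', y')) t x y) τ ξ η‖ ^ 2 =
      (2 * Real.pi) ^ 4 * ‖hat u (ξ, η)‖ ^ 2 * p ^ 2 := by
    rw [ftt_eq, norm_mul, norm_mul, ← hp]
    have : ‖((2 * Real.pi) ^ 2 : ℂ)‖ = (2 * Real.pi) ^ 2 := by
      rw [norm_pow, norm_mul, Complex.norm_real, Real.norm_of_nonneg Real.pi_pos.le]; simp
    rw [this]; ring
  rw [hf, locDens]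
  simp only
  set fN := phiCutD χ ((2 : ℝ) ^ n) (Real.sqrt (ξ ^ 2 + η ^ 2)) with hfN
  set fM := phiCutD χ ((2 : ℝ) ^ m) (ξ + η) with hfM
  set fL := phiCutD χ ((2 : ℝ) ^ l) (τ - ξ ^ 3 - η ^ 3) with hfL
  have hind : 0 ≤ (Set.Icc (-(2 * (2 : ℝ) ^ l)) (2 * (2 : ℝ) ^ l)).indicator (1 : ℝ → ℝ)
      (τ - (ξ ^ 3 + η ^ 3)) := Set.indicator_nonneg (fun _ _ => zero_le_one) _
  by_cases hNMl : fN = 0 ∨ fM = 0 ∨ fL = 0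
  · have : fN * fM * fL = 0 := by rcases hNMl with h | h | h <;> simp [h]
    rw [this]
    simp only [ne_eq, OfNat.ofNat_ne_zero, not_false_eq_true, zero_pow, zero_mul, mul_zero]
    positivity
  push Not at hNMl
  obtain ⟨hn, hm, hl⟩ := hNMl
  obtain ⟨n1, n2⟩ := phi_supp hs ho hN hn
  obtain ⟨m1, m2⟩ := phi_supp hs ho hM hm
  obtain ⟨l1, l2⟩ := phi_supp hs ho hL hl
  have hI : (Set.Icc (-(2 * (2 : ℝ) ^ l)) (2 * (2 : ℝ) ^ l)).indicator (1 : ℝ → ℝ)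
      (τ - (ξ ^ 3 + η ^ 3)) = 1 := by
    rw [Set.indicator_of_mem]
    · rfl
    · rw [← sub_sub]
      exact abs_le.1 l2.le
  rw [hI, mul_one]
  rw [abs_of_nonneg (Real.sqrt_nonneg _)] at n1 n2
  have hsq := Real.sq_sqrt (show 0 ≤ ξ ^ 2 + η ^ 2 by positivity)
  set r := Real.sqrt (ξ ^ 2 + η ^ 2)
  set N : ℝ := (2 : ℝ) ^ n
  set M : ℝ := (2 : ℝ) ^ m
  have w1 : jbr N s ^ 2 ≤ 4 ^ |s| * (1 + (ξ ^ 2 + η ^ 2)) ^ s := by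
    rw [jbr_sq, ← hsq]
    exact rpow_compare (by positivity) (by positivity) (by nlinarith) (by nlinarith) s
  have w2 : jbr (M ^ 2 + (2 : ℝ) ^ l) (1 / 2) ^ 2 ≤ (1 + M ^ 2) + (2 : ℝ) ^ l := by
    have := jbr_half_sq_le (show 0 ≤ M ^ 2 + (2 : ℝ) ^ l by positivity)
    linarith
  obtain ⟨p1, p2⟩ := hprof ((ξ + η) ^ 2) (τ - ξ ^ 3 - η ^ 3) (sq_nonneg _)
  rw [← hp] at p1 p2
  have K1 : 1 + M ^ 2 ≤ 4 * (1 + (ξ + η) ^ 2) := by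
    rw [← sq_abs (ξ + η)]; nlinarith
  have K2 : 1 + (ξ + η) ^ 2 ≤ 4 * (1 + M ^ 2) := by
    rw [← sq_abs (ξ + η)]; nlinarith [abs_nonneg (ξ + η)]
  have S1 : ((2 : ℝ) ^ l) ^ 2 ≤ 4 * (τ - ξ ^ 3 - η ^ 3) ^ 2 := by
    rw [← sq_abs (τ - ξ ^ 3 - η ^ 3)]; nlinarith
  have q1 : (1 + M ^ 2) * p ≤ 16 * C := by
    calc (1 + M ^ 2) * p ≤ 4 * (1 + (ξ + η) ^ 2) * p := by gcongr
      _ = 4 * ((1 + (ξ + η) ^ 2) * p) := by ring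
      _ ≤ 4 * C := by gcongr
      _ ≤ 16 * C := by linarith
  have q2 : ((2 : ℝ) ^ l) ^ 2 * p ≤ 16 * C * (1 + M ^ 2) := by
    calc ((2 : ℝ) ^ l) ^ 2 * p ≤ 4 * (τ - ξ ^ 3 - η ^ 3) ^ 2 * p := by gcongr
      _ = 4 * ((τ - ξ ^ 3 - η ^ 3) ^ 2 * p) := by ring
      _ ≤ 4 * (C * (1 + (ξ + η) ^ 2)) := by gcongr
      _ ≤ 4 * (C * (4 * (1 + M ^ 2))) := by gcongr
      _ = _ := by ring
  have hdec := dyadic_decay (show 0 < 1 + M ^ 2 by positivity) hp0 l q1 q2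
  have w3 : jbr (M ^ 2 + (2 : ℝ) ^ l) (1 / 2) ^ 2 * p ^ 2 ≤
      4 * (16 * C) ^ 2 * (1 / 2) ^ (l - Int.log 2 (1 + M ^ 2)).natAbs / (2 : ℝ) ^ l := by
    rw [le_div_iff₀ hL]
    refine le_trans ?_ hdec
    calc _ = jbr (M ^ 2 + (2 : ℝ) ^ l) (1 / 2) ^ 2 * (2 : ℝ) ^ l * p ^ 2 := by ring
      _ ≤ _ := by gcongr
  have hfL1 : fL ^ 2 ≤ 1 := phi_sq_le h0 h1 _ _
  calc _ = (jbr N s ^ 2) * (jbr (M ^ 2 + (2 : ℝ) ^ l) (1 / 2) ^ 2 * p ^ 2) * fL ^ 2 *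
        (fN ^ 2 * fM ^ 2 * ((2 * Real.pi) ^ 4 * ‖hat u (ξ, η)‖ ^ 2)) := by ring
    _ ≤ (4 ^ |s| * (1 + (ξ ^ 2 + η ^ 2)) ^ s) *
        (4 * (16 * C) ^ 2 * (1 / 2) ^ (l - Int.log 2 (1 + M ^ 2)).natAbs / (2 : ℝ) ^ l) * 1 *
        (fN ^ 2 * fM ^ 2 * ((2 * Real.pi) ^ 4 * ‖hat u (ξ, η)‖ ^ 2)) := by
        gcongr
    _ = _ := by ring

/-- The bound of one dyadic piece, with geometric decay in `l` around `log₂ (1 + M²)`. -/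
lemma piece_le {χ ψ : ℝ → ℝ} (hχ : Continuous χ) (h0 : ∀ t, 0 ≤ χ t) (h1 : ∀ t, χ t ≤ 1)
    (hs : Function.support χ ⊆ Set.Ioo (-2) 2)
    (ho : ∀ t ∈ Set.Icc (-1 : ℝ) 1, χ t = 1) (s : ℝ) {C : ℝ} (hC : 0 < C)
    (hprof : ∀ K σ : ℝ, 0 ≤ K →
      (1 + K) * ‖prof ψ K σ‖ ≤ C ∧ σ ^ 2 * ‖prof ψ K σ‖ ≤ C * (1 + K))
    (u : 𝓢(ℝ × ℝ, ℂ)) (n m l : ℤ) :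
    ENNReal.ofReal (jbr ((2 : ℝ) ^ n) s * jbr (((2 : ℝ) ^ m) ^ 2 + (2 : ℝ) ^ l) (1 / 2)) *
        PQLnorm χ ((2 : ℝ) ^ n) ((2 : ℝ) ^ m) ((2 : ℝ) ^ l)
          (fun t x y => (ψ t : ℂ) * Wfun (fun x' y' => u (x', y')) t x y) ≤
      ENNReal.ofReal (4 * (4 ^ |s| * (2 * Real.pi) ^ 4 * (4 * (16 * C) ^ 2))) ^ ((1 : ℝ) / 2) *
        ENNReal.ofReal ((1 / 2) ^ (l - Int.log 2 (1 + ((2 : ℝ) ^ m) ^ 2)).natAbs) ^ ((1 : ℝ) / 2) *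
        (∫⁻ z, ENNReal.ofReal (locDens χ s u n m z)) ^ ((1 : ℝ) / 2) := by
  set W := jbr ((2 : ℝ) ^ n) s * jbr (((2 : ℝ) ^ m) ^ 2 + (2 : ℝ) ^ l) (1 / 2) with hW
  have hW0 : 0 ≤ W := mul_nonneg (jbr_nonneg _ _) (jbr_nonneg _ _)
  have hL : (0 : ℝ) < (2 : ℝ) ^ l := by positivity
  set D := 4 ^ |s| * (2 * Real.pi) ^ 4 * (4 * (16 * C) ^ 2) with hD
  set q : ℝ := (1 / 2) ^ (l - Int.log 2 (1 + ((2 : ℝ) ^ m) ^ 2)).natAbs with hq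
  have hD0 : 0 ≤ D := by positivity
  have hq0 : 0 ≤ q := by positivity
  have hWs : ENNReal.ofReal W = ENNReal.ofReal (W ^ 2) ^ ((1 : ℝ) / 2) := by
    rw [ENNReal.ofReal_rpow_of_nonneg (by positivity) (by norm_num), ← Real.sqrt_eq_rpow,
      Real.sqrt_sq hW0]
  rw [hWs, PQLnorm, ← ENNReal.mul_rpow_of_nonneg _ _ (by norm_num),
    ← ENNReal.mul_rpow_of_nonneg _ _ (by norm_num), ← ENNReal.mul_rpow_of_nonneg _ _ (by norm_num)]
  refine ENNReal.rpow_le_rpow ?_ (by norm_num)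
  rw [← lintegral_const_mul' _ _ ENNReal.ofReal_ne_top]
  set I : Set ℝ := Set.Icc (-(2 * (2 : ℝ) ^ l)) (2 * (2 : ℝ) ^ l) with hI
  set G : ℝ × ℝ × ℝ → ℝ≥0∞ := fun v =>
    ENNReal.ofReal (D * q / (2 : ℝ) ^ l) * ENNReal.ofReal (locDens χ s u n m v.2) *
      I.indicator 1 (v.1 - (v.2.1 ^ 3 + v.2.2 ^ 3)) with hG
  have hind : Measurable (I.indicator (1 : ℝ → ℝ≥0∞)) :=
    measurable_one.indicator measurableSet_Icc
  have hGm : Measurable G := by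
    refine Measurable.mul (Measurable.const_mul ?_ _) (hind.comp (by fun_prop))
    exact ((measurable_locDens hχ s u n m).comp measurable_snd).ennreal_ofReal
  have hden : ∀ z, 0 ≤ locDens χ s u n m z := fun z => by unfold locDens; positivity
  calc _ ≤ ∫⁻ v, G v := by
        refine lintegral_mono fun v => ?_
        have := integrand_le h0 h1 hs ho s hC hprof u n m l v.1 v.2.1 v.2.2
        simp only
        rw [← ENNReal.ofReal_mul (by positivity)]
        refine (ENNReal.ofReal_le_ofReal this).trans (le_of_eq ?_)
        rw [ENNReal.ofReal_mul (mul_nonneg (by positivity) (hden _)),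
          ENNReal.ofReal_mul (by positivity)]
        simp only [hG]
        congr 1
        by_cases hx : v.1 - (v.2.1 ^ 3 + v.2.2 ^ 3) ∈ I
        · rw [Set.indicator_of_mem hx, Set.indicator_of_mem hx]; simp
        · rw [Set.indicator_of_notMem hx, Set.indicator_of_notMem hx]; simp
    _ = ∫⁻ z : ℝ × ℝ, ∫⁻ τ : ℝ, G (τ, z) := lintegral_prod_symm' G hGm
    _ = ∫⁻ z : ℝ × ℝ, ENNReal.ofReal (4 * D) * ENNReal.ofReal q *
          ENNReal.ofReal (locDens χ s u n m z) := by
        refine lintegral_congr fun z => ?_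
        simp only [hG]
        rw [lintegral_const_mul' _ _ (ENNReal.mul_ne_top ENNReal.ofReal_ne_top ENNReal.ofReal_ne_top),
          lintegral_sub_right_eq_self (fun τ => I.indicator (1 : ℝ → ℝ≥0∞) τ),
          lintegral_indicator_one measurableSet_Icc, Real.volume_Icc, mul_right_comm,
          ← ENNReal.ofReal_mul (p := D * q / (2 : ℝ) ^ l) (by positivity),
          ← ENNReal.ofReal_mul (p := 4 * D) (by positivity)]
        congr 2
        field_simp
        ring
    _ = _ := by
        rw [lintegral_const_mul' _ _ (ENNReal.mul_ne_top ENNReal.ofReal_ne_top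
          ENNReal.ofReal_ne_top)]

/-- The two-sided geometric series summing the modulations. -/
def geoSum : ℝ≥0∞ := ∑' j : ℤ, ENNReal.ofReal ((1 / 2) ^ j.natAbs) ^ ((1 : ℝ) / 2)

lemma geoSum_ne_top : geoSum ≠ ⊤ := by
  have hb : ∀ j : ℤ, ENNReal.ofReal ((1 / 2) ^ j.natAbs) ^ ((1 : ℝ) / 2) =
      ENNReal.ofReal (Real.sqrt (1 / 2) ^ j.natAbs) := by
    intro j
    rw [ENNReal.ofReal_rpow_of_nonneg (by positivity) (by norm_num), ← Real.sqrt_eq_rpow]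
    congr 1
    refine (Real.sqrt_eq_iff_mul_self_eq (by positivity) (by positivity)).2 ?_
    rw [← mul_pow, Real.mul_self_sqrt (by norm_num)]
  have hr : Real.sqrt (1 / 2) < 1 := by
    rw [Real.sqrt_lt' one_pos]; norm_num
  have hsum : Summable fun j : ℤ => Real.sqrt (1 / 2) ^ j.natAbs := by
    refine Summable.of_nat_of_neg ?_ ?_ <;>
      simpa using summable_geometric_of_lt_one (Real.sqrt_nonneg _) hr
  rw [geoSum]
  simp_rw [hb]
  exact hsum.tsum_ofReal_ne_top

/-- Linear estimate: `‖ψ(t) W(t) u₀‖_{X^{s,1/2,1}} ≤ C ‖u₀‖_{H^s}`. -/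
theorem linear_estimate (s : ℝ)
    (χ : ℝ → ℝ) (hχ_smooth : ContDiff ℝ (⊤ : ℕ∞) χ) (hχ_even : ∀ t, χ (-t) = χ t)
    (hχ_nonneg : ∀ t, 0 ≤ χ t) (hχ_le_one : ∀ t, χ t ≤ 1)
    (hχ_supp : Function.support χ ⊆ Set.Ioo (-2) 2)
    (hχ_one : ∀ t ∈ Set.Icc (-1 : ℝ) 1, χ t = 1)
    (ψ : ℝ → ℝ) (hψ_smooth : ContDiff ℝ (⊤ : ℕ∞) ψ)
    (hψ_supp : Function.support ψ ⊆ Set.Icc (-2) 2)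
    (hψ_one : ∀ t ∈ Set.Icc (-1 : ℝ) 1, ψ t = 1) :
    ∃ C : ℝ, 0 < C ∧
      ∀ u₀ : SchwartzMap (ℝ × ℝ) ℂ,
        Xnorm χ s (1 / 2)
            (fun t x y => (ψ t : ℂ) * Wfun (fun x' y' => u₀ (x', y')) t x y) ≤
          ENNReal.ofReal C * Hsnorm s (fun x y => u₀ (x, y)) := by
  obtain ⟨C, hC, hprof⟩ := prof_bounds hψ_smooth hψ_supp hψ_one
  have hχ := hχ_smooth.continuous
  set D := ENNReal.ofReal (4 * (4 ^ |s| * (2 * Real.pi) ^ 4 * (4 * (16 * C) ^ 2))) ^ ((1 : ℝ) / 2)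
    with hD
  have hDtop : D ≠ ⊤ := ENNReal.rpow_ne_top_of_nonneg (by norm_num) ENNReal.ofReal_ne_top
  have hctop : D * geoSum * 2 ≠ ⊤ :=
    ENNReal.mul_ne_top (ENNReal.mul_ne_top hDtop geoSum_ne_top) (by norm_num)
  refine ⟨(D * geoSum * 2).toReal + 1, by positivity, fun u => ?_⟩
  have hH : Hsnorm s (fun x y => u (x, y)) =
      (∫⁻ z : ℝ × ℝ, ENNReal.ofReal ((1 + (z.1 ^ 2 + z.2 ^ 2)) ^ s * ‖hat u z‖ ^ 2)) ^
        ((1 : ℝ) / 2) := by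
    simp only [Hsnorm, fxy2_eq_hat, Prod.mk.eta]
  have hsq : ∀ x : ℝ≥0∞, (x ^ ((1 : ℝ) / 2)) ^ 2 = x := fun x => by
    rw [← ENNReal.rpow_mul_natCast]; norm_num
  have hsq' : ∀ x : ℝ≥0∞, (x ^ 2) ^ ((1 : ℝ) / 2) = x := fun x => by
    rw [← ENNReal.rpow_natCast_mul]; norm_num
  have hrow : ∀ n m : ℤ, (∑' l : ℤ,
      ENNReal.ofReal (jbr ((2 : ℝ) ^ n) s * jbr (((2 : ℝ) ^ m) ^ 2 + (2 : ℝ) ^ l) (1 / 2)) *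
        PQLnorm χ ((2 : ℝ) ^ n) ((2 : ℝ) ^ m) ((2 : ℝ) ^ l)
          (fun t x y => (ψ t : ℂ) * Wfun (fun x' y' => u (x', y')) t x y)) ^ 2 ≤
      (D * geoSum) ^ 2 * ∫⁻ z, ENNReal.ofReal (locDens χ s u n m z) := by
    intro n m
    rw [← hsq (∫⁻ z, ENNReal.ofReal (locDens χ s u n m z)), ← mul_pow]
    refine pow_le_pow_left' ?_ 2
    refine (ENNReal.tsum_le_tsum fun l =>
      piece_le hχ hχ_nonneg hχ_le_one hχ_supp hχ_one s hC hprof u n m l).trans (le_of_eq ?_)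
    rw [ENNReal.tsum_mul_right, ENNReal.tsum_mul_left, geoSum]
    congr 2
    exact (Equiv.subRight (Int.log 2 (1 + ((2 : ℝ) ^ m) ^ 2))).tsum_eq
      (fun j : ℤ => ENNReal.ofReal ((1 / 2) ^ j.natAbs) ^ ((1 : ℝ) / 2))
  calc _ ≤ ((D * geoSum * 2) ^ 2 *
        ∫⁻ z : ℝ × ℝ, ENNReal.ofReal ((1 + (z.1 ^ 2 + z.2 ^ 2)) ^ s * ‖hat u z‖ ^ 2)) ^
          ((1 : ℝ) / 2) := by
        refine ENNReal.rpow_le_rpow ?_ (by norm_num)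
        refine (ENNReal.tsum_le_tsum fun n => ENNReal.tsum_le_tsum fun m => hrow n m).trans ?_
        simp_rw [ENNReal.tsum_mul_left]
        rw [mul_pow _ (2 : ℝ≥0∞), mul_assoc _ ((2 : ℝ≥0∞) ^ 2)]
        gcongr
        refine (tsum_locDens_le hχ hχ_nonneg hχ_le_one hχ_supp hχ_one s u).trans (le_of_eq ?_)
        norm_num
    _ = (D * geoSum * 2) * Hsnorm s (fun x y => u (x, y)) := by
        rw [ENNReal.mul_rpow_of_nonneg _ _ (by norm_num), hsq', hH]
    _ ≤ _ := by
        gcongr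
        rw [ENNReal.ofReal_add ENNReal.toReal_nonneg zero_le_one, ENNReal.ofReal_toReal hctop]
        exact le_self_add
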